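/- Two K-programs P and Q are single-pass congruent (denote the same SPI) if and only if the equation P = Q is derivable in the proof system L_spc. -/

import Mathlib

/-- Primitive instructions over a set `A` of basic instructions:
basic instructions `a`, positive tests `+a`, negative tests `-a`,
jump instructions `#k` and the termination instruction `!`. -/
inductive PrimInstr (A : Type) : Type where
  | basic (a : A)
  | pos (a : A)
  | neg (a : A)
  | jump (k : Nat)
  | halt
deriving DecidableEq

/-- Instructions of the semigroup `L`: primitive instructions and
repeat instructions (repeaters) `↰n`.  (Genuine repeaters have `n ≥ 1`;
this is imposed as a hypothesis wherever relevant.) -/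
inductive Instr (A : Type) : Type where
  | prim (u : PrimInstr A)
  | rep (n : Nat)
deriving DecidableEq

/-- Is this instruction a repeater? -/
def Instr.isRep {A : Type} : Instr A → Bool
  | .rep _ => true
  | .prim _ => false

/-- `↰n` is a genuine repeat instruction only for `n ≥ 1`. -/
def Instr.valid {A : Type} : Instr A → Prop
  | .prim _ => True
  | .rep n => 1 ≤ n

/-- Terms of the semigroup `L`: finite nonempty sequences of instructions
under (associative) concatenation. -/
inductive LTerm (A : Type) : Type where
  | instr (i : Instr A)
  | seq (s t : LTerm A)
deriving DecidableEq

/-- The (nonempty) sequence of instructions an `L`-term consists of. -/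
def LTerm.flat {A : Type} : LTerm A → List (Instr A)
  | .instr i => [i]
  | .seq s t => s.flat ++ t.flat

/-- `cat [i_1, …, i_n] t` is the `L`-term `i_1 ; … ; i_n ; t`. -/
def cat {A : Type} : List (Instr A) → LTerm A → LTerm A
  | [], t => t
  | i :: l, t => (LTerm.instr i).seq (cat l t)

/-- `pcat [u_1, …, u_n] t` is the `L`-term `u_1 ; … ; u_n ; t`
for primitive instructions `u_i`. -/
def pcat {A : Type} (l : List (PrimInstr A)) (t : LTerm A) : LTerm A :=
  cat (l.map Instr.prim) t

/-- `listPow l m` is the `m`-fold concatenation `l^m` of the list `l`. -/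
def listPow {α : Type} (l : List α) : ℕ → List α
  | 0 => []
  | n+1 => l ++ listPow l n

/-- The primitive instructions occurring in an instruction sequence. -/
def primsOf {A : Type} (l : List (Instr A)) : List (PrimInstr A) :=
  l.filterMap fun i => match i with
    | .prim u => some u
    | .rep _ => none

/-- The counter of the final repeat instruction of an instruction sequence, if any. -/
def repOf {A : Type} (l : List (Instr A)) : Option ℕ :=
  match l.getLast? with
  | some (.rep n) => some n
  | _ => none

/-- Position lookup for the SPI denoted by `u_1 ; … ; u_k ; ↰n` (`us` the list of
the `u_i`): positions beyond the end wrap around through the last `n` instructions. -/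
def kAt {A : Type} (us : List (PrimInstr A)) (n : ℕ) (p : ℕ) : Option (PrimInstr A) :=
  if p < us.length then us[p]?
  else us[us.length - n + (p - (us.length - n)) % n]?

/-- The SPI denoted by a `K`-program, given as position lookup on its
instruction sequence: a repeater-free `K`-program `u_1 ; … ; u_n` denotes
`u_1 ; … ; u_n` and `u_1 ; … ; u_k ; ↰n` (`n ≤ k`) denotes `u_1 ; … ; u_{k-n}`
followed by the infinite repetition of `u_{k-n+1} ; … ; u_k`. -/
def kDen {A : Type} (l : List (Instr A)) : ℕ → Option (PrimInstr A) :=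
  match repOf l with
  | none => fun p => (primsOf l)[p]?
  | some n => kAt (primsOf l) n

/-- `K`-programs: first canonical `L`-forms `u_1 ; … ; u_k` (all `u_i`
primitive), or `u_1 ; … ; u_k ; ↰n` with `1 ≤ n ≤ k`. -/
def IsKProg {A : Type} (t : LTerm A) : Prop :=
  (∃ (u : PrimInstr A) (us : List (PrimInstr A)), t.flat = (u :: us).map Instr.prim) ∨
  (∃ (u : PrimInstr A) (us : List (PrimInstr A)) (n : ℕ),
     t.flat = (u :: us).map Instr.prim ++ [Instr.rep n] ∧ 1 ≤ n ∧ n ≤ (u :: us).length)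

/-- The proof system `L_spc`: equational-logic derivability from the axioms (1)-(4) for single-pass congruence on `L` (associativity, unfolding of repeat counters, absorption `↰n ; X = ↰n`, and rotation), where `u_i`, `v_j` range over primitive instructions and `m, n ≥ 1`. -/
inductive DerivLspc {{A : Type}} : LTerm A → LTerm A → Prop
  | refl (t : LTerm A) : DerivLspc t t
  | symm {{s t : LTerm A}} : DerivLspc s t → DerivLspc t s
  | trans {{s t u : LTerm A}} : DerivLspc s t → DerivLspc t u → DerivLspc s u
  | seq_congr {{s s' t t' : LTerm A}} : DerivLspc s s' → DerivLspc t t' → DerivLspc (s.seq t) (s'.seq t')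
  | assoc (s t u : LTerm A) : DerivLspc ((s.seq t).seq u) (s.seq (t.seq u))
  | ax2 (u : PrimInstr A) (us : List (PrimInstr A)) (m : ℕ) (hm : 1 ≤ m) :
      DerivLspc (pcat (u :: us) (.instr (.rep (u :: us).length)))
          (pcat (listPow (u :: us) m) (.instr (.rep (m * (u :: us).length))))
  | ax3 (n : ℕ) (hn : 1 ≤ n) (t : LTerm A) :
      DerivLspc ((LTerm.instr (.rep n)).seq t) (.instr (.rep n))
  | ax4 (u : PrimInstr A) (us : List (PrimInstr A)) (v : PrimInstr A) (vs : List (PrimInstr A)) :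
      DerivLspc
        (pcat ((u :: us) ++ (v :: vs)) (.instr (.rep ((u :: us).length + (v :: vs).length))))
        (pcat ((u :: us) ++ (v :: vs) ++ (u :: us)) (.instr (.rep ((u :: us).length + (v :: vs).length))))

/-!
Soundness: `L_spc` preserves the effect of a term on an arbitrary preceding sequence of primitive
instructions, because a repeater only depends on what has been collected before it.

Completeness: a program `w; ↰n` can be provably unwound to any sufficiently long `w'; ↰(m * n)`.
Two congruent programs `w; ↰n` and `v; ↰m` thus reach the common counter `m * n` and a common
length; by soundness their unwindings still denote the same SPI, whose initial segment of that
length determines the instruction sequence, so the unwindings coincide.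
-/

section Lists
variable {α : Type}

theorem length_listPow (l : List α) (m : ℕ) : (listPow l m).length = m * l.length := by
  induction m with
  | zero => simp only [listPow, List.length_nil, Nat.zero_mul]
  | succ m ih => rw [listPow, List.length_append, ih, Nat.succ_mul, Nat.add_comm]

theorem getElem?_listPow (l : List α) {m i : ℕ} (hi : i < m * l.length) :
    (listPow l m)[i]? = l[i % l.length]? := by
  induction m generalizing i with
  | zero => omega
  | succ m ih =>
    rw [listPow]
    obtain h | h := Nat.lt_or_ge i l.length
    · rw [List.getElem?_append_left h, Nat.mod_eq_of_lt h]
    · rw [List.getElem?_append_right h, ih (by rw [Nat.succ_mul] at hi; omega),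
        Nat.mod_eq_sub_mod h]

end Lists

section RepeatedLookup
variable {A : Type}

theorem kAt_of_lt {w : List (PrimInstr A)} {p : ℕ} (hp : p < w.length) (n : ℕ) :
    kAt w n p = w[p]? :=
  if_pos hp

theorem kAt_append (a b : List (PrimInstr A)) (p : ℕ) :
    kAt (a ++ b) b.length p =
      if p < a.length then a[p]? else b[(p - a.length) % b.length]? := by
  simp only [kAt, List.length_append, Nat.add_sub_cancel]
  split_ifs with hab ha ha
  · rw [List.getElem?_append_left ha]
  · rw [List.getElem?_append_right (by omega), Nat.mod_eq_of_lt (by omega)]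
  · omega
  · rw [List.getElem?_append_right (by omega), Nat.add_sub_cancel_left]

theorem kAt_append_listPow (a : List (PrimInstr A)) {b : List (PrimInstr A)} (hb : b ≠ [])
    {m : ℕ} (hm : 1 ≤ m) :
    kAt (a ++ b) b.length = kAt (a ++ listPow b m) (m * b.length) := by
  funext p
  rw [kAt_append, ← length_listPow, kAt_append, length_listPow]
  have hpos : 0 < m * b.length := Nat.mul_pos hm (List.length_pos_iff.mpr hb)
  rw [getElem?_listPow _ (Nat.mod_lt _ hpos), Nat.mod_mul_left_mod]

theorem kAt_append_rotate (a : List (PrimInstr A)) {u : List (PrimInstr A)} (hu : u ≠ [])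
    (v : List (PrimInstr A)) :
    kAt (a ++ (u ++ v)) (u.length + v.length) =
      kAt (a ++ (u ++ v ++ u)) (u.length + v.length) := by
  funext p
  have hu_pos : 0 < u.length := List.length_pos_iff.mpr hu
  have hregroup : a ++ (u ++ v ++ u) = (a ++ u) ++ (v ++ u) := by simp only [List.append_assoc]
  have hleft := kAt_append a (u ++ v) p
  have hright := kAt_append (a ++ u) (v ++ u) p
  simp only [List.length_append, Nat.add_comm v.length] at hleft hright
  rw [hregroup, hleft, hright]
  split_ifs with ha hau hau
  · rw [List.getElem?_append_left ha]
  · omega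
  · rw [Nat.mod_eq_of_lt (by omega), List.getElem?_append_left (by omega),
      List.getElem?_append_right (by omega)]
  · have hmod : (p - (a.length + u.length)) % (u.length + v.length) < (u ++ v).length := by
      rw [List.length_append]
      exact Nat.mod_lt _ (by omega)
    rw [← List.rotate_append_length_eq u v, List.getElem?_rotate hmod, List.length_append,
      Nat.mod_add_mod]
    congr 2
    omega

theorem kAt_ne_none {w : List (PrimInstr A)} {n : ℕ} (hn : 1 ≤ n) (hnw : n ≤ w.length) (p : ℕ) :
    kAt w n p ≠ none := by
  have hmod : (p - (w.length - n)) % n < n := Nat.mod_lt _ hn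
  unfold kAt
  split_ifs with hp <;> rw [Ne, List.getElem?_eq_none_iff] <;> omega

theorem getElem?_ne_kAt (l : List (PrimInstr A)) {w : List (PrimInstr A)} {n : ℕ} (hn : 1 ≤ n)
    (hnw : n ≤ w.length) : (fun p => l[p]?) ≠ kAt w n := fun h =>
  kAt_ne_none hn hnw l.length <|
    (congrFun h l.length).symm.trans (List.getElem?_eq_none le_rfl)

theorem eq_of_kAt_eq {w v : List (PrimInstr A)} {n m : ℕ} (hlen : w.length = v.length)
    (h : kAt w n = kAt v m) : w = v := by
  refine List.ext_getElem? fun p => ?_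
  obtain hp | hp := Nat.lt_or_ge p w.length
  · rw [← kAt_of_lt hp n, h, kAt_of_lt (hlen ▸ hp)]
  · rw [List.getElem?_eq_none hp, List.getElem?_eq_none (hlen ▸ hp)]

end RepeatedLookup

section Flattening
variable {A : Type}

theorem flat_cat (l : List (Instr A)) (t : LTerm A) : (cat l t).flat = l ++ t.flat := by
  induction l with
  | nil => rfl
  | cons i l ih => rw [cat, LTerm.flat, ih]; rfl

theorem flat_pcat_rep (w : List (PrimInstr A)) (n : ℕ) :
    (pcat w (.instr (.rep n))).flat = w.map Instr.prim ++ [Instr.rep n] :=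
  flat_cat _ _

theorem cat_append (l l' : List (Instr A)) (t : LTerm A) :
    cat (l ++ l') t = cat l (cat l' t) := by
  induction l with
  | nil => rfl
  | cons i l ih => rw [List.cons_append, cat, ih, cat]

theorem pcat_append (w w' : List (PrimInstr A)) (t : LTerm A) :
    pcat (w ++ w') t = pcat w (pcat w' t) := by
  rw [pcat, List.map_append, cat_append, pcat, pcat]

namespace DerivLspc

theorem cat_congr (l : List (Instr A)) {s t : LTerm A} (h : DerivLspc s t) :
    DerivLspc (cat l s) (cat l t) := by
  induction l with
  | nil => exact h
  | cons i l ih => exact seq_congr (refl _) ih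

theorem pcat_append_congr (a : List (PrimInstr A)) {w w' : List (PrimInstr A)} {s t : LTerm A}
    (h : DerivLspc (pcat w s) (pcat w' t)) : DerivLspc (pcat (a ++ w) s) (pcat (a ++ w') t) := by
  rw [pcat_append, pcat_append]
  exact cat_congr _ h

theorem seq_cat_flat (s t : LTerm A) : DerivLspc (s.seq t) (cat s.flat t) := by
  induction s generalizing t with
  | instr i => exact refl _
  | seq s₁ s₂ ih₁ ih₂ =>
    rw [LTerm.flat, cat_append]
    exact (assoc s₁ s₂ t).trans ((ih₁ _).trans (cat_congr _ (ih₂ t)))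

theorem exists_cat_instr (t : LTerm A) :
    ∃ l i, t.flat = l ++ [i] ∧ DerivLspc t (cat l (.instr i)) := by
  induction t with
  | instr i => exact ⟨[], i, rfl, refl _⟩
  | seq s t _ iht =>
    obtain ⟨l, i, hflat, hderiv⟩ := iht
    refine ⟨s.flat ++ l, i, by rw [LTerm.flat, hflat, List.append_assoc], ?_⟩
    rw [cat_append]
    exact (seq_cat_flat s t).trans (cat_congr _ hderiv)

theorem of_flat_eq {s t : LTerm A} (h : s.flat = t.flat) : DerivLspc s t := by
  obtain ⟨l, i, hs, hsl⟩ := exists_cat_instr s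
  obtain ⟨l', i', ht, htl⟩ := exists_cat_instr t
  obtain ⟨rfl, hi⟩ := List.append_inj' (hs.symm.trans (h.trans ht)) rfl
  obtain rfl := List.singleton_inj.mp hi
  exact hsl.trans htl.symm

end DerivLspc

end Flattening

section Soundness
variable {A : Type}

/-- The effect of one instruction on the sequence `a` of primitive instructions preceding it: a
primitive instruction is appended, a repeater completes `a` to an SPI. The completed SPI is thrown
as an exception, so that whatever follows a repeater is ignored, as axiom (3) demands. -/
def load (a : List (PrimInstr A)) :
    Instr A → Except (ℕ → Option (PrimInstr A)) (List (PrimInstr A))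
  | .prim u => .ok (a ++ [u])
  | .rep n => .error (kAt a n)

/-- The effect of an instruction sequence `l` on the primitive instructions `a` preceding it. Its
dependence on `a` makes it compositional: the SPI of `l` alone does not determine that of `a; l`
when a repeater of `l` reaches back into `a`. -/
def loadAll (l : List (Instr A)) (a : List (PrimInstr A)) :
    Except (ℕ → Option (PrimInstr A)) (List (PrimInstr A)) :=
  l.foldlM load a

/-- The SPI resulting from `loadAll`, by position lookup. -/
def loadedSPI : Except (ℕ → Option (PrimInstr A)) (List (PrimInstr A)) →
    ℕ → Option (PrimInstr A)
  | .ok w => fun p => w[p]?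
  | .error f => f

theorem loadAll_append (l l' : List (Instr A)) (a : List (PrimInstr A)) :
    loadAll (l ++ l') a = loadAll l a >>= loadAll l' :=
  List.foldlM_append

theorem loadAll_map_prim (w a : List (PrimInstr A)) :
    loadAll (w.map Instr.prim) a = .ok (a ++ w) := by
  induction w generalizing a with
  | nil => rw [List.append_nil]; rfl
  | cons u w ih => exact (ih (a ++ [u])).trans (by rw [List.append_assoc, List.singleton_append])

theorem loadAll_map_prim_append_rep (w a : List (PrimInstr A)) (n : ℕ) :
    loadAll (w.map Instr.prim ++ [Instr.rep n]) a = .error (kAt (a ++ w) n) := by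
  rw [loadAll_append, loadAll_map_prim]
  rfl

theorem DerivLspc.loadAll_flat_eq {s t : LTerm A} (h : DerivLspc s t) :
    loadAll s.flat = loadAll t.flat := by
  induction h with
  | refl t => rfl
  | symm _ ih => exact ih.symm
  | trans _ _ ih₁ ih₂ => exact ih₁.trans ih₂
  | seq_congr _ _ ih₁ ih₂ =>
    funext a
    rw [LTerm.flat, LTerm.flat, loadAll_append, loadAll_append, ih₁, ih₂]
  | assoc s t u => simp only [LTerm.flat, List.append_assoc]
  | ax2 u us m hm =>
    funext a
    rw [flat_pcat_rep, flat_pcat_rep, loadAll_map_prim_append_rep, loadAll_map_prim_append_rep,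
      kAt_append_listPow a (List.cons_ne_nil u us) hm]
  | ax3 n _ t => rfl
  | ax4 u us v vs =>
    funext a
    rw [flat_pcat_rep, flat_pcat_rep, loadAll_map_prim_append_rep, loadAll_map_prim_append_rep,
      kAt_append_rotate a (List.cons_ne_nil u us)]

theorem primsOf_map_prim_append (w : List (PrimInstr A)) (l : List (Instr A)) :
    primsOf (w.map Instr.prim ++ l) = w ++ primsOf l := by
  rw [primsOf, List.filterMap_append, List.filterMap_map]
  exact congrArg (· ++ _) List.filterMap_some

theorem kDen_map_prim (w : List (PrimInstr A)) : kDen (w.map Instr.prim) = fun p => w[p]? := by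
  have hrep : repOf (w.map Instr.prim) = none := by
    rw [repOf, List.getLast?_map]
    cases w.getLast? <;> rfl
  have hprims : primsOf (w.map Instr.prim) = w := by
    rw [← List.append_nil (w.map _), primsOf_map_prim_append]
    exact List.append_nil w
  rw [kDen, hrep, hprims]

theorem kDen_map_prim_append_rep (w : List (PrimInstr A)) (n : ℕ) :
    kDen (w.map Instr.prim ++ [Instr.rep n]) = kAt w n := by
  have hrep : repOf (w.map Instr.prim ++ [Instr.rep n]) = some n := by
    rw [repOf, List.getLast?_concat]
  have hprims : primsOf (w.map Instr.prim ++ [Instr.rep n]) = w :=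
    (primsOf_map_prim_append w _).trans (List.append_nil w)
  rw [kDen, hrep, hprims]

theorem IsKProg.kDen_flat {t : LTerm A} (ht : IsKProg t) :
    kDen t.flat = loadedSPI (loadAll t.flat []) := by
  obtain ⟨u, us, hflat⟩ | ⟨u, us, n, hflat, -⟩ := ht
  · rw [hflat, kDen_map_prim, loadAll_map_prim]
    rfl
  · rw [hflat, kDen_map_prim_append_rep, loadAll_map_prim_append_rep]
    rfl

theorem DerivLspc.kDen_flat_eq {P Q : LTerm A} (hP : IsKProg P) (hQ : IsKProg Q)
    (h : DerivLspc P Q) : kDen P.flat = kDen Q.flat := by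
  rw [hP.kDen_flat, hQ.kDen_flat, h.loadAll_flat_eq]

theorem DerivLspc.kAt_eq {w v : List (PrimInstr A)} {n m : ℕ}
    (h : DerivLspc (pcat w (.instr (.rep n))) (pcat v (.instr (.rep m)))) :
    kAt w n = kAt v m := by
  have hload := congrFun h.loadAll_flat_eq []
  rw [flat_pcat_rep, flat_pcat_rep, loadAll_map_prim_append_rep,
    loadAll_map_prim_append_rep] at hload
  exact Except.error.inj hload

end Soundness

section Completeness
variable {A : Type}

theorem exists_eq_append_cons_of_le_length {α : Type*} {w : List α} {n : ℕ} (hn : 1 ≤ n)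
    (hnw : n ≤ w.length) : ∃ a b bs, w = a ++ b :: bs ∧ (b :: bs).length = n := by
  have hlen : (w.drop (w.length - n)).length = n := by rw [List.length_drop]; omega
  obtain ⟨b, bs, hdrop⟩ := List.exists_cons_of_length_pos (hlen ▸ hn)
  exact ⟨w.take (w.length - n), b, bs, by rw [← hdrop, List.take_append_drop], hdrop ▸ hlen⟩

namespace DerivLspc

theorem rotate_one (u : PrimInstr A) (us : List (PrimInstr A)) :
    DerivLspc (pcat (u :: us) (.instr (.rep (u :: us).length)))
      (pcat (u :: us ++ [u]) (.instr (.rep (u :: us).length))) := by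
  cases us with
  | nil =>
    -- Axiom (4) needs a body of length at least two, so `u; ↰1` is doubled first:
    -- `u; ↰1 = u; u; ↰2 = u; u; u; ↰2 = u; u; ↰1`.
    have double : DerivLspc (pcat [u] (.instr (.rep 1))) (pcat [u, u] (.instr (.rep 2))) :=
      ax2 u [] 2 one_le_two
    have rotate : DerivLspc (pcat [u, u] (.instr (.rep 2))) (pcat [u, u, u] (.instr (.rep 2))) :=
      ax4 u [] u []
    exact double.trans (rotate.trans (pcat_append_congr [u] double).symm)
  | cons v vs =>
    have hlen : [u].length + (v :: vs).length = (u :: v :: vs).length := Nat.add_comm _ _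
    exact hlen ▸ ax4 u [] v vs

theorem exists_lengthen {w : List (PrimInstr A)} {n : ℕ} (hn : 1 ≤ n) (hnw : n ≤ w.length)
    {L : ℕ} (hL : w.length ≤ L) :
    ∃ w', w'.length = L ∧
      DerivLspc (pcat w (.instr (.rep n))) (pcat w' (.instr (.rep n))) := by
  induction L, hL using Nat.le_induction with
  | base => exact ⟨w, rfl, refl _⟩
  | succ L hL ih =>
    obtain ⟨w₁, hlen, hderiv⟩ := ih
    obtain ⟨a, b, bs, rfl, rfl⟩ := exists_eq_append_cons_of_le_length hn (hlen ▸ hnw.trans hL)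
    refine ⟨a ++ (b :: bs ++ [b]), ?_, hderiv.trans (pcat_append_congr a (rotate_one b bs))⟩
    rw [← List.append_assoc, List.length_append, hlen, List.length_singleton]

theorem exists_unwind {w : List (PrimInstr A)} {n : ℕ} (hn : 1 ≤ n) (hnw : n ≤ w.length)
    {m : ℕ} (hm : 1 ≤ m) {L : ℕ} (hL : w.length + m * n ≤ L + n) :
    ∃ w', w'.length = L ∧
      DerivLspc (pcat w (.instr (.rep n))) (pcat w' (.instr (.rep (m * n)))) := by
  obtain ⟨a, b, bs, rfl, rfl⟩ := exists_eq_append_cons_of_le_length hn hnw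
  have hlen : (a ++ listPow (b :: bs) m).length = a.length + m * (b :: bs).length := by
    rw [List.length_append, length_listPow]
  obtain ⟨w', hw', hderiv⟩ := exists_lengthen (w := a ++ listPow (b :: bs) m) (L := L)
    (Nat.mul_pos hm hn) (by omega) (by rw [List.length_append] at hL; omega)
  exact ⟨w', hw', (pcat_append_congr a (ax2 b bs m hm)).trans hderiv⟩

theorem of_kAt_eq {w v : List (PrimInstr A)} {n m : ℕ} (hn : 1 ≤ n) (hnw : n ≤ w.length)
    (hm : 1 ≤ m) (hmv : m ≤ v.length) (h : kAt w n = kAt v m) :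
    DerivLspc (pcat w (.instr (.rep n))) (pcat v (.instr (.rep m))) := by
  obtain ⟨w', hw', hww'⟩ := exists_unwind (L := w.length + v.length + m * n) hn hnw hm (by omega)
  obtain ⟨v', hv', hvv'⟩ := exists_unwind (L := w.length + v.length + m * n) hm hmv hn
    (by rw [Nat.mul_comm n m]; omega)
  rw [Nat.mul_comm n m] at hvv'
  have hunwound : kAt w' (m * n) = kAt v' (m * n) := by rw [← hww'.kAt_eq, h, hvv'.kAt_eq]
  obtain rfl := eq_of_kAt_eq (hw'.trans hv'.symm) hunwound
  exact hww'.trans hvv'.symm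

theorem of_kDen_flat_eq {P Q : LTerm A} (hP : IsKProg P) (hQ : IsKProg Q)
    (h : kDen P.flat = kDen Q.flat) : DerivLspc P Q := by
  obtain ⟨u, us, hPflat⟩ | ⟨u, us, n, hPflat, hn, hnu⟩ := hP <;>
    obtain ⟨v, vs, hQflat⟩ | ⟨v, vs, m, hQflat, hm, hmv⟩ := hQ <;>
    simp only [hPflat, hQflat, kDen_map_prim, kDen_map_prim_append_rep] at h
  · have huv : u :: us = v :: vs := List.ext_getElem? (congrFun h)
    exact of_flat_eq (by rw [hPflat, hQflat, huv])
  · exact absurd h (getElem?_ne_kAt _ hm hmv)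
  · exact absurd h.symm (getElem?_ne_kAt _ hn hnu)
  · have hPcanon := of_flat_eq (hPflat.trans (flat_pcat_rep _ n).symm)
    have hQcanon := of_flat_eq (hQflat.trans (flat_pcat_rep _ m).symm)
    exact hPcanon.trans ((of_kAt_eq hn hnu hm hmv h).trans hQcanon.symm)

end DerivLspc

end Completeness

/-- Two `K`-programs are single-pass congruent (denote the same SPI) if and
only if their equality is derivable in the proof system `L_spc`. -/
theorem K_single_pass_congruence_iff_Lspc (A : Type) (P Q : LTerm A)
    (hP : IsKProg P) (hQ : IsKProg Q) :
    kDen P.flat = kDen Q.flat ↔ DerivLspc P Q :=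
  ⟨DerivLspc.of_kDen_flat_eq hP hQ, DerivLspc.kDen_flat_eq hP hQ⟩
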